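/- arXiv:0801.2588 — 5 statements merged into one kernel-verified Lean document; each statement's English description precedes it below -/
import Mathlib

section
/- Let 0 < β ≤ 1 and 1/2 ≤ r < 1 be real numbers, and let B(β,r) = {(α₁,α₂) ∈ ℝ² : α₁ ≥ 0, α₂ ≥ 0, (1-β)·max([1-α₁]₊, [1-α₂]₊) + β·[1-α₁]₊ ≤ r}. Then the infimum of α₁ + α₂ over B(β,r) equals 2(1-r) if β < 1/2, and equals (1-r)/β if β ≥ 1/2. -/
open Set

/-- For `0 < β ≤ 1` and `1/2 ≤ r < 1`, the infimum of `α₁ + α₂` over the outage region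
`B(β,r) = {(α₁,α₂) : α₁ ≥ 0, α₂ ≥ 0, (1-β)·max([1-α₁]₊,[1-α₂]₊) + β·[1-α₁]₊ ≤ r}`
equals `2(1-r)` if `β < 1/2` and `(1-r)/β` if `β ≥ 1/2`. -/
theorem stmt0 (β r : ℝ) (hβ : 0 < β) (hβ1 : β ≤ 1) (hr : 1/2 ≤ r) (hr1 : r < 1)
    (B : Set (ℝ × ℝ))
    (hB : B = {p : ℝ × ℝ | 0 ≤ p.1 ∧ 0 ≤ p.2 ∧
      (1 - β) * max (max (1 - p.1) 0) (max (1 - p.2) 0) + β * max (1 - p.1) 0 ≤ r}) :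
    (β < 1/2 → sInf ((fun p : ℝ × ℝ => p.1 + p.2) '' B) = 2 * (1 - r)) ∧
    (1/2 ≤ β → sInf ((fun p : ℝ × ℝ => p.1 + p.2) '' B) = (1 - r) / β) := by
  have key : ∀ a b : ℝ,
      (1 - β) * max (max (1 - a) 0) (max (1 - b) 0) + β * max (1 - a) 0 ≤ r →
      (1 - r ≤ (1 - β) * b + β * a) ∧ 1 - r ≤ a := by
    intro a b h
    have h1 : 1 - a ≤ max (1 - a) 0 := le_max_left _ _
    have h2 : 1 - b ≤ max (max (1 - a) 0) (max (1 - b) 0) :=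
      (le_max_left _ _).trans (le_max_right _ _)
    have h3 : 1 - a ≤ max (max (1 - a) 0) (max (1 - b) 0) :=
      (le_max_left _ _).trans (le_max_left _ _)
    have hb : 0 ≤ 1 - β := by linarith
    have e1 := mul_le_mul_of_nonneg_left h1 hβ.le
    have e2 := mul_le_mul_of_nonneg_left h2 hb
    have e3 := mul_le_mul_of_nonneg_left h3 hb
    constructor <;> linarith
  subst hB
  constructor
  · intro h
    apply IsLeast.csInf_eq
    constructor
    · refine ⟨(1 - r, 1 - r), ⟨?_, ?_, ?_⟩, ?_⟩
      · simp only; linarith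
      · simp only; linarith
      · simp only [max_self]
        rw [max_eq_left (by linarith)]
        linarith
      · simp only; ring
    · rintro _ ⟨⟨a, b⟩, ⟨ha, hb, hab⟩, rfl⟩
      simp only at *
      obtain ⟨k1, k2⟩ := key a b hab
      rcases le_total a b with hle | hle
      · linarith
      · nlinarith
  · intro h
    have hq : (1 - r) / β ≤ 1 := by rw [div_le_one hβ]; linarith
    have hq0 : 0 ≤ (1 - r) / β := div_nonneg (by linarith) hβ.le
    have hm : β * ((1 - r) / β) = 1 - r := by field_simp
    apply IsLeast.csInf_eq
    constructor
    · refine ⟨((1 - r) / β, 0), ⟨hq0, le_refl _, ?_⟩, ?_⟩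
      · simp only
        rw [max_eq_left (a := 1 - (1 - r) / β) (by linarith),
          max_eq_left (a := (1 : ℝ) - 0) (by norm_num), max_eq_right (by linarith)]
        linarith
      · simp
    · rintro _ ⟨⟨a, b⟩, ⟨ha, hb, hab⟩, rfl⟩
      simp only at *
      obtain ⟨k1, k2⟩ := key a b hab
      rw [div_le_iff₀ hβ]
      nlinarith
end

section
/- Let 0 < β ≤ 1 and 0 < r < 1/2 be real numbers, and let B(β,r) = {(α₁,α₂) ∈ ℝ² : α₁ ≥ 0, α₂ ≥ 0, (1-β)·max([1-α₁]₊, [1-α₂]₊) + β·[1-α₁]₊ ≤ r}. Then the infimum of α₁ + α₂ over B(β,r) equals 2(1-r) if β < 1/2; equals 2 - r/(1-β) if 1/2 ≤ β < 1-r; and equals (1-r)/β if β ≥ 1-r. -/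
open Set

/-- For `0 < β ≤ 1` and `0 < r < 1/2`, the infimum of `α₁ + α₂` over the outage region
`B(β,r)` equals `2(1-r)` if `β < 1/2`, `2 - r/(1-β)` if `1/2 ≤ β < 1-r`,
and `(1-r)/β` if `β ≥ 1-r`. -/
theorem stmt1 (β r : ℝ) (hβ : 0 < β) (hβ1 : β ≤ 1) (hr : 0 < r) (hr1 : r < 1/2)
    (B : Set (ℝ × ℝ))
    (hB : B = {p : ℝ × ℝ | 0 ≤ p.1 ∧ 0 ≤ p.2 ∧
      (1 - β) * max (max (1 - p.1) 0) (max (1 - p.2) 0) + β * max (1 - p.1) 0 ≤ r}) :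
    (β < 1/2 → sInf ((fun p : ℝ × ℝ => p.1 + p.2) '' B) = 2 * (1 - r)) ∧
    (1/2 ≤ β → β < 1 - r → sInf ((fun p : ℝ × ℝ => p.1 + p.2) '' B) = 2 - r / (1 - β)) ∧
    (1 - r ≤ β → sInf ((fun p : ℝ × ℝ => p.1 + p.2) '' B) = (1 - r) / β) := by
  subst hB
  have key : ∀ p : ℝ × ℝ, 0 ≤ p.1 → 0 ≤ p.2 →
      (1 - β) * max (max (1 - p.1) 0) (max (1 - p.2) 0) + β * max (1 - p.1) 0 ≤ r →
      ∃ x y : ℝ, 0 ≤ x ∧ 0 ≤ y ∧ y ≤ 1 ∧ 2 - x - y ≤ p.1 + p.2 ∧ x ≤ r ∧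
        (1 - β) * y + β * x ≤ r := by
    intro p h1 h2 h
    have hx1 := le_max_left (1 - p.1) 0
    have hy1 := le_max_left (1 - p.2) 0
    have hM1 := le_max_left (max (1 - p.1) 0) (max (1 - p.2) 0)
    have hM2 := le_max_right (max (1 - p.1) 0) (max (1 - p.2) 0)
    have e1 := mul_le_mul_of_nonneg_left hM1 (sub_nonneg.2 hβ1)
    have e2 := mul_le_mul_of_nonneg_left hM2 (sub_nonneg.2 hβ1)
    refine ⟨max (1 - p.1) 0, max (1 - p.2) 0, le_max_right _ _, le_max_right _ _,
      max_le (by linarith) (by norm_num), by linarith, by linarith, by linarith⟩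
  refine ⟨fun h => ?_, fun h h' => ?_, fun h => ?_⟩
  · apply IsLeast.csInf_eq
    constructor
    · refine ⟨(1 - r, 1 - r), ⟨?_, ?_, ?_⟩, ?_⟩
      · simp only; linarith
      · simp only; linarith
      · simp only [sub_sub_cancel, max_self, max_eq_left hr.le]; linarith
      · simp only; ring
    · rintro _ ⟨p, ⟨h1, h2, h3⟩, rfl⟩
      obtain ⟨x, y, hx, hy, hy1, hs, hxr, hc⟩ := key p h1 h2 h3
      refine le_trans ?_ hs
      nlinarith
  · have hb : 0 < 1 - β := by linarith
    apply IsLeast.csInf_eq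
    constructor
    · have hq : 0 < r / (1 - β) := by positivity
      have hq1 : r / (1 - β) ≤ 1 := by rw [div_le_one hb]; linarith
      refine ⟨(1, 1 - r / (1 - β)), ⟨?_, ?_, ?_⟩, ?_⟩
      · simp only; linarith
      · simp only; linarith
      · simp only [sub_sub_cancel, sub_self, max_self, max_eq_left hq.le, max_eq_right hq.le]
        rw [mul_div_cancel₀ _ hb.ne']; linarith
      · simp only; ring
    · rintro _ ⟨p, ⟨h1, h2, h3⟩, rfl⟩
      obtain ⟨x, y, hx, hy, hy1, hs, hxr, hc⟩ := key p h1 h2 h3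
      refine le_trans ?_ hs
      have : x + y ≤ r / (1 - β) := by rw [le_div_iff₀ hb]; nlinarith
      linarith
  · apply IsLeast.csInf_eq
    constructor
    · have hq : 0 < (1 - r) / β := div_pos (by linarith) hβ
      have hq1 : (1 - r) / β ≤ 1 := by rw [div_le_one hβ]; linarith
      have hq2 : β * ((1 - r) / β) = 1 - r := mul_div_cancel₀ _ hβ.ne'
      refine ⟨((1 - r) / β, 0), ⟨?_, ?_, ?_⟩, ?_⟩
      · simp only; linarith
      · simp only; linarith
      · simp only
        rw [max_eq_left (by linarith : (0:ℝ) ≤ 1 - (1 - r) / β),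
          max_eq_left (by linarith : (0:ℝ) ≤ 1 - 0), max_eq_right (by linarith)]
        linarith
      · simp only; ring
    · rintro _ ⟨p, ⟨h1, h2, h3⟩, rfl⟩
      obtain ⟨x, y, hx, hy, hy1, hs, hxr, hc⟩ := key p h1 h2 h3
      refine le_trans ?_ hs
      rw [div_le_iff₀ hβ]
      nlinarith [mul_nonneg (sub_nonneg.2 hy1) (by linarith : 0 ≤ 2 * β - 1)]
end

section
/- Let μ be the exponential distribution with rate 1 on the real line. Fix integers M ≥ m ≥ 2 and a real number r with 0 < r ≤ (m-1)/M. Then lim_{ρ→∞} log μ( (ρ^{Mr/m - 1}, ρ^{Mr/(m-1) - 1}) ) / log ρ = Mr/(m-1) - 1. -/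
open Real Filter MeasureTheory ProbabilityTheory

lemma expMeasure_Ioo_toReal {x y : ℝ} (hx : 0 ≤ x) (hxy : x ≤ y) :
    (expMeasure 1 (Set.Ioo x y)).toReal = Real.exp (-x) - Real.exp (-y) := by
  have : IsProbabilityMeasure (expMeasure 1) := isProbabilityMeasure_expMeasure one_pos
  have : NullSingletonClass (expMeasure 1) := by
    unfold expMeasure gammaMeasure
    infer_instance
  have h : expMeasure 1 (Set.Ioo x y) = expMeasure 1 (Set.Ioc x y) := measure_congr Ioo_ae_eq_Ioc
  rw [h]
  have h2 : expMeasure 1 (Set.Ioc x y) = (cdf (expMeasure 1)).measure (Set.Ioc x y) := by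
    rw [measure_cdf]
  rw [h2, StieltjesFunction.measure_Ioc, cdf_expMeasure_eq one_pos, cdf_expMeasure_eq one_pos,
    if_pos hx, if_pos (hx.trans hxy), ENNReal.toReal_ofReal]
  · simp
  · have := Real.exp_le_exp.2 (neg_le_neg hxy)
    simp only [one_mul]
    linarith

/-- For the unit-rate exponential distribution `μ`, integers `M ≥ m ≥ 2` and
`0 < r ≤ (m-1)/M`, the probability `μ((ρ^{Mr/m - 1}, ρ^{Mr/(m-1) - 1}))` that the relay
decodes after exactly `m` slots has SNR exponent `1 - Mr/(m-1)`:
`lim_{ρ→∞} log μ((ρ^{Mr/m - 1}, ρ^{Mr/(m-1) - 1})) / log ρ = Mr/(m-1) - 1`. -/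
theorem stmt5 (M m : ℤ) (hm : 2 ≤ m) (hM : m ≤ M) (r : ℝ) (hr : 0 < r)
    (hr' : r ≤ ((m : ℝ) - 1) / M) :
    Filter.Tendsto
      (fun ρ : ℝ =>
        Real.log ((ProbabilityTheory.expMeasure 1
          (Set.Ioo (ρ ^ ((M : ℝ) * r / m - 1)) (ρ ^ ((M : ℝ) * r / ((m : ℝ) - 1) - 1)))).toReal)
          / Real.log ρ)
      Filter.atTop (nhds ((M : ℝ) * r / ((m : ℝ) - 1) - 1)) := by
  have hm' : (2 : ℝ) ≤ m := by exact_mod_cast hm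
  have hM' : (m : ℝ) ≤ M := by exact_mod_cast hM
  have hM0 : (0 : ℝ) < M := by linarith
  have hm1 : (0 : ℝ) < (m : ℝ) - 1 := by linarith
  have hb : (M : ℝ) * r / ((m : ℝ) - 1) - 1 ≤ 0 := by
    rw [le_div_iff₀ hM0] at hr'
    rw [sub_nonpos, div_le_one hm1]
    linarith
  have hab : (M : ℝ) * r / m - 1 < (M : ℝ) * r / ((m : ℝ) - 1) - 1 := by
    have : (M : ℝ) * r / m < (M : ℝ) * r / ((m : ℝ) - 1) :=
      div_lt_div_of_pos_left (by positivity) hm1 (by linarith)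
    linarith
  generalize (M : ℝ) * r / m - 1 = a at *
  generalize (M : ℝ) * r / ((m : ℝ) - 1) - 1 = b at *
  have hdec : Tendsto (fun ρ : ℝ => ρ ^ (a - b)) atTop (nhds 0) := by
    have := tendsto_rpow_neg_atTop (y := b - a) (by linarith)
    simpa using this
  have hlow : Tendsto (fun ρ : ℝ => b - (Real.log 2 + 1) / Real.log ρ) atTop (nhds b) := by
    have := (tendsto_const_nhds (x := b)).sub
      (Real.tendsto_log_atTop.const_div_atTop (Real.log 2 + 1))
    simpa using this
  have key : ∀ᶠ ρ : ℝ in atTop, 1 < ρ ∧ ρ ^ (a - b) ≤ 1 / 2 :=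
    (eventually_gt_atTop 1).and (hdec.eventually_le_const (by norm_num))
  have key2 : ∀ ρ : ℝ, 1 < ρ ∧ ρ ^ (a - b) ≤ 1 / 2 →
      b * Real.log ρ - (Real.log 2 + 1) ≤
        Real.log ((expMeasure 1 (Set.Ioo (ρ ^ a) (ρ ^ b))).toReal) ∧
      Real.log ((expMeasure 1 (Set.Ioo (ρ ^ a) (ρ ^ b))).toReal) ≤ b * Real.log ρ := by
    rintro ρ ⟨h1, h2⟩
    have h0 : 0 < ρ := by linarith
    have hx : 0 < ρ ^ a := Real.rpow_pos_of_pos h0 _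
    have hy : 0 < ρ ^ b := Real.rpow_pos_of_pos h0 _
    have hy1 : ρ ^ b ≤ 1 := Real.rpow_le_one_of_one_le_of_nonpos h1.le hb
    have hxy : ρ ^ a ≤ ρ ^ b / 2 := by
      have : ρ ^ a = ρ ^ b * ρ ^ (a - b) := by
        rw [← Real.rpow_add h0]; congr 1; ring
      rw [this]
      nlinarith
    rw [expMeasure_Ioo_toReal hx.le (by linarith), ← Real.log_rpow h0]
    generalize ρ ^ a = x at *
    generalize ρ ^ b = y at *
    have hl : y / 2 * Real.exp (-1) ≤ Real.exp (-x) - Real.exp (-y) := by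
      have e1 : Real.exp (-x) = Real.exp (-y) * Real.exp (y - x) := by
        rw [← Real.exp_add]; congr 1; ring
      have e2 := Real.add_one_le_exp (y - x)
      have e3 : Real.exp (-1) ≤ Real.exp (-y) := Real.exp_le_exp.2 (by linarith)
      have e4 := Real.exp_pos (-1)
      calc y / 2 * Real.exp (-1) ≤ (Real.exp (y - x) - 1) * Real.exp (-y) :=
            mul_le_mul (by linarith) e3 e4.le (by linarith)
        _ = _ := by rw [e1]; ring
    have hu : Real.exp (-x) - Real.exp (-y) ≤ y := by
      have e1 := Real.add_one_le_exp (-y)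
      have e2 : Real.exp (-x) ≤ 1 := Real.exp_le_one_iff.2 (by linarith)
      linarith
    have hp : 0 < y / 2 * Real.exp (-1) := by positivity
    refine ⟨?_, Real.log_le_log (hp.trans_le hl) hu⟩
    have := Real.log_le_log hp hl
    rw [Real.log_mul (by positivity) (by positivity), Real.log_exp,
      Real.log_div (by positivity) (by positivity)] at this
    linarith
  refine tendsto_of_tendsto_of_tendsto_of_le_of_le' hlow tendsto_const_nhds ?_ ?_
  · filter_upwards [key] with ρ h
    have hl : 0 < Real.log ρ := Real.log_pos h.1
    rw [le_div_iff₀ hl, sub_mul, div_mul_cancel₀ _ hl.ne']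
    exact (key2 ρ h).1
  · filter_upwards [key] with ρ h
    have hl : 0 < Real.log ρ := Real.log_pos h.1
    rw [div_le_iff₀ hl]
    exact (key2 ρ h).2
end

section
/- Let M ≥ m ≥ 1 be integers, T ≥ 1 a real number, and 0 < r < 1 a real number. Define g(α₁,α₂) = (M-m)·max([1-α₁]₊, [1-α₂]₊) + m·[1-α₁]₊ - rM. Then inf { α₁ + α₂ + T·g(α₁,α₂) : α₁ ≥ 0, α₂ ≥ 0, g(α₁,α₂) > 0 } = inf { α₁ + α₂ : α₁ ≥ 0, α₂ ≥ 0, g(α₁,α₂) ≤ 0 }. -/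
open Set

/-- Reduction when the second gain dominates. -/
lemma red_aux (M m r a b : ℝ) (hm : 1 ≤ m) (hM : m = M ∨ m + 1 ≤ M) (hr0 : 0 < r)
    (ha : 0 ≤ a) (hab : a ≤ b) (hb : b ≤ 1)
    (hG : 0 < (M - m) * b + m * a - r * M) :
    ∃ a' b' : ℝ, 0 ≤ a' ∧ a' ≤ b' ∧ b' ≤ 1 ∧ (M - m) * b' + m * a' - r * M ≤ 0 ∧
      (1 - a') + (1 - b') ≤ (1 - a) + (1 - b) + ((M - m) * b + m * a - r * M) := by
  rcases hM with h | h
  · subst h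
    have hra : r < a := by nlinarith
    refine ⟨r, b, hr0.le, by linarith, hb, by linarith, ?_⟩
    nlinarith
  · have hd : 1 ≤ M - m := by linarith
    by_cases hc : (M - m) * b ≤ r * M
    · obtain ⟨c, hcdef⟩ : ∃ c, m * c = r * M - (M - m) * b :=
        ⟨(r * M - (M - m) * b) / m, by field_simp⟩
      have hc0 : 0 ≤ c := by
        by_contra! hlt
        nlinarith
      have hca : c < a := by
        by_contra! hlt
        nlinarith
      refine ⟨c, b, hc0, by linarith, hb, by linarith, ?_⟩
      nlinarith
    · push Not at hc
      obtain ⟨c, hcdef⟩ : ∃ c, (M - m) * c = r * M :=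
        ⟨r * M / (M - m), by field_simp⟩
      have hrM : 0 < r * M := by apply mul_pos hr0; linarith
      have hc0 : 0 ≤ c := by
        by_contra! hlt
        nlinarith
      have hcb : c < b := by
        by_contra! hlt
        nlinarith
      refine ⟨0, c, le_rfl, hc0, by linarith, by linarith, ?_⟩
      nlinarith

/-- Reduction to an outage point. -/
lemma red (M m r a b : ℝ) (hm : 1 ≤ m) (hM : m = M ∨ m + 1 ≤ M) (hr0 : 0 < r)
    (ha : 0 ≤ a) (ha1 : a ≤ 1) (hb0 : 0 ≤ b) (hb : b ≤ 1)
    (hG : 0 < (M - m) * max a b + m * a - r * M) :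
    ∃ a' b' : ℝ, 0 ≤ a' ∧ a' ≤ 1 ∧ 0 ≤ b' ∧ b' ≤ 1 ∧
      (M - m) * max a' b' + m * a' - r * M ≤ 0 ∧
      (1 - a') + (1 - b') ≤ (1 - a) + (1 - b) + ((M - m) * max a b + m * a - r * M) := by
  have hM1 : 1 ≤ M := by rcases hM with h | h <;> linarith
  rcases le_total a b with hab | hab
  · rw [max_eq_right hab] at hG ⊢
    obtain ⟨a', b', h1, h2, h3, h4, h5⟩ := red_aux M m r a b hm hM hr0 ha hab hb hG
    refine ⟨a', b', h1, by linarith, by linarith, h3, ?_, h5⟩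
    rw [max_eq_right h2]; exact h4
  · rw [max_eq_left hab] at hG ⊢
    have hra : r < a := by
      by_contra! hlt
      nlinarith
    by_cases hbr : b ≤ r
    · refine ⟨r, b, hr0.le, by linarith, hb0, hb, ?_, ?_⟩
      · rw [max_eq_left hbr]; linarith
      · nlinarith
    · push Not at hbr
      obtain ⟨a', b', h1, h2, h3, h4, h5⟩ :=
        red_aux M m r b b hm hM hr0 hb0 le_rfl hb (by nlinarith)
      refine ⟨a', b', h1, by linarith, by linarith, h3, ?_, ?_⟩
      · rw [max_eq_right h2]; exact h4
      · nlinarith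

/-- The Varadhan exponent of the GLRT no-outage error probability equals the outage
exponent: with `g(α₁,α₂) = (M-m)·max([1-α₁]₊,[1-α₂]₊) + m·[1-α₁]₊ - rM`,
`inf {α₁+α₂+T·g(α₁,α₂) : α₁,α₂ ≥ 0, g(α₁,α₂) > 0} = inf {α₁+α₂ : α₁,α₂ ≥ 0, g(α₁,α₂) ≤ 0}`. -/
theorem stmt10 (M m : ℤ) (hm : 1 ≤ m) (hM : m ≤ M) (T : ℝ) (hT : 1 ≤ T)
    (r : ℝ) (hr0 : 0 < r) (hr1 : r < 1)
    (g : ℝ → ℝ → ℝ)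
    (hg : ∀ α₁ α₂ : ℝ, g α₁ α₂ =
      ((M : ℝ) - m) * max (max (1 - α₁) 0) (max (1 - α₂) 0)
        + (m : ℝ) * max (1 - α₁) 0 - r * M) :
    sInf {x : ℝ | ∃ α₁ α₂ : ℝ, 0 ≤ α₁ ∧ 0 ≤ α₂ ∧ 0 < g α₁ α₂ ∧
        x = α₁ + α₂ + T * g α₁ α₂} =
      sInf {x : ℝ | ∃ α₁ α₂ : ℝ, 0 ≤ α₁ ∧ 0 ≤ α₂ ∧ g α₁ α₂ ≤ 0 ∧ x = α₁ + α₂} := by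
  have hmR : (1 : ℝ) ≤ m := by exact_mod_cast hm
  have hMR : (m : ℝ) = M ∨ (m : ℝ) + 1 ≤ M := by
    rcases hM.eq_or_lt with h | h
    · left; exact_mod_cast h
    · right; exact_mod_cast h
  have hM1 : (1 : ℝ) ≤ M := by rcases hMR with h | h <;> linarith
  have hrM : 0 < r * (M : ℝ) := by apply mul_pos hr0; linarith
  have hg0 : 0 < g 0 0 := by
    rw [hg]; norm_num; nlinarith
  have hg1 : g 1 1 ≤ 0 := by
    rw [hg]; norm_num; linarith
  apply le_antisymm
  · refine le_csInf ⟨1 + 1, 1, 1, by norm_num, by norm_num, hg1, rfl⟩ ?_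
    rintro x ⟨p, q, hp, hq, hpq, rfl⟩
    refine le_of_forall_pos_le_add fun ε hε => ?_
    have hcont : Continuous (fun t : ℝ => g (t * p) (t * q)) := by
      simp only [hg]; fun_prop
    have hcomp : IsCompact (Icc (0 : ℝ) 1 ∩ {t | g (t * p) (t * q) ≤ 0}) :=
      isCompact_Icc.inter_right (isClosed_le hcont continuous_const)
    obtain ⟨t0, ⟨⟨ht0, ht1⟩, htg⟩, hmin⟩ :=
      hcomp.exists_isLeast ⟨1, ⟨by norm_num, by norm_num⟩, by simpa using hpq⟩
    have htg' : g (t0 * p) (t0 * q) ≤ 0 := htg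
    have ht0' : 0 < t0 := by
      rcases ht0.eq_or_lt with h | h
      · rw [← h] at htg'
        simp only [zero_mul] at htg'
        linarith
      · exact h
    have hFc : Continuous (fun t : ℝ => t * p + t * q + T * g (t * p) (t * q)) := by
      simp only [hg]; fun_prop
    have hlt0 : t0 * p + t0 * q + T * g (t0 * p) (t0 * q) < p + q + ε := by
      have : T * g (t0 * p) (t0 * q) ≤ 0 := mul_nonpos_of_nonneg_of_nonpos (by linarith) htg'
      nlinarith
    have hev := (hFc.tendsto t0).eventually (gt_mem_nhds hlt0)
    have hev2 := (hev.filter_mono (nhdsWithin_le_nhds (s := Iio t0))).and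
      (Ioo_mem_nhdsLT ht0')
    obtain ⟨t, htF, htt0, htt1⟩ := hev2.exists
    refine csInf_le_of_le ⟨0, ?_⟩ ⟨t * p, t * q, by positivity, by positivity, ?_, rfl⟩ htF.le
    · rintro y ⟨u, v, hu, hv, huv, rfl⟩
      positivity
    · by_contra! hlt
      have := hmin ⟨⟨htt0.le, by linarith⟩, hlt⟩
      linarith
  · refine le_csInf ⟨_, 0, 0, le_rfl, le_rfl, hg0, rfl⟩ ?_
    rintro x ⟨p, q, hp, hq, hpq, rfl⟩
    have hG := hpq
    rw [hg] at hG
    obtain ⟨a, b, ha0, ha1, hb0, hb1, h1, h2⟩ := red M m r (max (1 - p) 0) (max (1 - q) 0) hmR hMR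
      hr0 (le_max_right _ _) (max_le (by linarith) (by norm_num)) (le_max_right _ _)
      (max_le (by linarith) (by norm_num)) hG
    rw [← hg] at h2
    refine csInf_le_of_le ⟨0, ?_⟩ ⟨1 - a, 1 - b, by linarith, by linarith, ?_, rfl⟩ ?_
    · rintro y ⟨u, v, hu, hv, huv, rfl⟩
      positivity
    · rw [hg]
      simpa [max_eq_left ha0, max_eq_left hb0] using h1
    · have := le_max_left (1 - p) 0
      have := le_max_left (1 - q) 0
      nlinarith
end

section
/- Let c > 0 and let f : [0,c] → ℝ be continuous. Then lim_{ρ→∞} log( ∫₀^c ρ^{-f(ν)} dν ) / log ρ = -inf_{ν ∈ [0,c]} f(ν). -/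
open Real Filter MeasureTheory Set

/-- One-dimensional Laplace/Varadhan principle for SNR exponents: for continuous
`f : [0,c] → ℝ`, `lim_{ρ→∞} log(∫₀^c ρ^{-f(ν)} dν)/log ρ = -inf_{ν∈[0,c]} f(ν)`. -/
theorem stmt17 (c : ℝ) (hc : 0 < c) (f : ℝ → ℝ) (hf : ContinuousOn f (Set.Icc 0 c)) :
    Filter.Tendsto
      (fun ρ : ℝ => Real.log (∫ ν in (0:ℝ)..c, ρ ^ (-(f ν))) / Real.log ρ)
      Filter.atTop (nhds (-sInf (f '' Set.Icc 0 c))) := by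
  obtain ⟨x0, hx0, hm, hmin⟩ :=
    isCompact_Icc.exists_sInf_image_eq_and_le (nonempty_Icc.2 hc.le) hf
  rw [hm]
  -- lower bound on the integral
  have key : ∀ ε > 0, ∃ d > 0, ∀ ρ : ℝ, 1 < ρ →
      d * ρ ^ (-(f x0 + ε)) ≤ ∫ ν in (0:ℝ)..c, ρ ^ (-(f ν)) := by
    intro ε hε
    obtain ⟨δ, hδ, h⟩ := Metric.continuousOn_iff.1 hf x0 hx0 ε hε
    obtain ⟨h0, h1⟩ := hx0
    have hab : max 0 (x0 - δ/2) < min c (x0 + δ/2) := by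
      rw [max_lt_iff, lt_min_iff, lt_min_iff]
      refine ⟨⟨hc, ?_⟩, ?_, ?_⟩ <;> linarith
    refine ⟨min c (x0 + δ/2) - max 0 (x0 - δ/2), sub_pos.2 hab, fun ρ hρ => ?_⟩
    have hρ0 : 0 < ρ := by linarith
    have hcont : ContinuousOn (fun ν => ρ ^ (-(f ν))) (Set.Icc 0 c) :=
      continuousOn_const.rpow hf.neg (fun _ _ => Or.inl hρ0.ne')
    have hint : IntervalIntegrable (fun ν => ρ ^ (-(f ν))) volume 0 c :=
      hcont.intervalIntegrable_of_Icc hc.le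
    have hsub : Set.Icc (max 0 (x0 - δ/2)) (min c (x0 + δ/2)) ⊆ Set.Icc 0 c :=
      Icc_subset_Icc (le_max_left _ _) (min_le_left _ _)
    calc _ = ∫ ν in (max 0 (x0 - δ/2))..(min c (x0 + δ/2)), ρ ^ (-(f x0 + ε)) := by
            simp
      _ ≤ ∫ ν in (max 0 (x0 - δ/2))..(min c (x0 + δ/2)), ρ ^ (-(f ν)) := by
            apply intervalIntegral.integral_mono_on hab.le (by simp)
              ((hcont.mono hsub).intervalIntegrable_of_Icc hab.le)
            intro x hx
            apply Real.rpow_le_rpow_of_exponent_le hρ.le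
            have h2 := (le_max_right _ _).trans hx.1
            have h3 := hx.2.trans (min_le_right _ _)
            have := h x (hsub hx) (by
              rw [Real.dist_eq, abs_lt]; constructor <;> linarith)
            rw [Real.dist_eq, abs_lt] at this
            linarith [this.2]
      _ ≤ _ := by
            apply intervalIntegral.integral_mono_interval (le_max_left _ _) hab.le
              (min_le_left _ _) _ hint
            exact Eventually.of_forall fun x => Real.rpow_nonneg hρ0.le _
  have hup : ∀ ρ : ℝ, 1 < ρ → ∫ ν in (0:ℝ)..c, ρ ^ (-(f ν)) ≤ c * ρ ^ (-(f x0)) := by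
    intro ρ hρ
    have hρ0 : 0 < ρ := by linarith
    have hcont : ContinuousOn (fun ν => ρ ^ (-(f ν))) (Set.Icc 0 c) :=
      continuousOn_const.rpow hf.neg (fun _ _ => Or.inl hρ0.ne')
    calc _ ≤ ∫ ν in (0:ℝ)..c, ρ ^ (-(f x0)) := by
            apply intervalIntegral.integral_mono_on hc.le
              (hcont.intervalIntegrable_of_Icc hc.le) (by simp)
            intro x hx
            apply Real.rpow_le_rpow_of_exponent_le hρ.le
            linarith [hmin x hx]
      _ = _ := by simp
  have hlog : ∀ d : ℝ, Tendsto (fun ρ : ℝ => Real.log d / Real.log ρ) atTop (nhds 0) :=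
    fun d => Real.tendsto_log_atTop.const_div_atTop _
  have hl : ∀ d : ℝ, 0 < d → ∀ t ρ : ℝ, 1 < ρ →
      Real.log (d * ρ ^ t) / Real.log ρ = Real.log d / Real.log ρ + t := by
    intro d hd t ρ hρ
    have hρ0 : 0 < ρ := by linarith
    have := Real.log_pos hρ
    rw [Real.log_mul hd.ne' (Real.rpow_pos_of_pos hρ0 _).ne', Real.log_rpow hρ0]
    field_simp
  refine tendsto_order.2 ⟨fun a ha => ?_, fun a ha => ?_⟩
  · obtain ⟨d, hd, h⟩ := key ((-f x0 - a) / 2) (by linarith)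
    filter_upwards [eventually_gt_atTop 1,
      (hlog d).eventually_const_lt (show -((-f x0 - a) / 2) < 0 by linarith)] with ρ hρ h1
    have hρ0 : 0 < ρ := by linarith
    refine lt_of_lt_of_le ?_ (div_le_div_of_nonneg_right
      (Real.log_le_log (mul_pos hd (Real.rpow_pos_of_pos hρ0 _)) (h ρ hρ)) (Real.log_pos hρ).le)
    rw [hl d hd _ ρ hρ]
    linarith
  · obtain ⟨d, hd, h⟩ := key 1 one_pos
    filter_upwards [eventually_gt_atTop 1,
      (hlog c).eventually_lt_const (show 0 < a + f x0 by linarith)] with ρ hρ h1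
    have hρ0 : 0 < ρ := by linarith
    refine lt_of_le_of_lt (div_le_div_of_nonneg_right
      (Real.log_le_log ((mul_pos hd (Real.rpow_pos_of_pos hρ0 _)).trans_le (h ρ hρ)) (hup ρ hρ))
      (Real.log_pos hρ).le) ?_
    rw [hl c hc _ ρ hρ]
    linarith
end
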